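/- For any two orthogonal projections P and Q on a complex Hilbert space, there exists a continuous path of orthogonal projections connecting P to Q if and only if rank P = rank Q and rank(I−P) = rank(I−Q); in particular, if P has infinite rank and infinite corank in a separable space, then P and I − P can be connected by a continuous path in the set of projections. -/

import Mathlib

/-- `P` is an orthogonal projection: a self-adjoint idempotent. -/
def IsOrthProj {H : Type*} [NormedAddCommGroup H] [InnerProductSpace ℂ H]
    [CompleteSpace H] (P : H →L[ℂ] H) : Prop :=
  IsSelfAdjoint P ∧ P * P = P

/-- A continuous path of orthogonal projections from `P` to `Q`. -/
def ProjPath {H : Type*} [NormedAddCommGroup H] [InnerProductSpace ℂ H]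
    [CompleteSpace H] (P Q : H →L[ℂ] H) : Prop :=
  ∃ f : ℝ → (H →L[ℂ] H), ContinuousOn f (Set.Icc 0 1) ∧ f 0 = P ∧ f 1 = Q ∧
    ∀ t ∈ Set.Icc (0 : ℝ) 1, IsOrthProj (f t)

section Helpers

open scoped InnerProductSpace ComplexInnerProductSpace

variable {H : Type*} [NormedAddCommGroup H] [InnerProductSpace ℂ H] [CompleteSpace H]

lemma projPath_iff_joinedIn (P Q : H →L[ℂ] H) :
    ProjPath P Q ↔ JoinedIn {R : H →L[ℂ] H | IsOrthProj R} P Q := by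
  constructor
  · rintro ⟨f, hf, h0, h1, h⟩
    refine JoinedIn.ofLine hf h0 h1 ?_
    rintro _ ⟨t, ht, rfl⟩
    exact h t ht
  · rintro ⟨γ, hγ⟩
    refine ⟨γ.extend, γ.continuous_extend.continuousOn, by simp, by simp, ?_⟩
    intro t ht
    rw [γ.extend_apply ht]
    exact hγ _

lemma ProjPath.symm {P Q : H →L[ℂ] H} (h : ProjPath P Q) : ProjPath Q P := by
  rw [projPath_iff_joinedIn] at *
  exact JoinedIn.symm h

lemma ProjPath.trans {P Q R : H →L[ℂ] H} (h : ProjPath P Q) (h' : ProjPath Q R) :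
    ProjPath P R := by
  rw [projPath_iff_joinedIn] at *
  exact JoinedIn.trans h h'

lemma IsOrthProj.compl {P : H →L[ℂ] H} (h : IsOrthProj P) : IsOrthProj (1 - P) := by
  refine ⟨(IsSelfAdjoint.one _).sub h.1, ?_⟩
  have := h.2
  rw [sub_mul, mul_sub, mul_sub, this]
  simp

lemma ProjPath.compl {P Q : H →L[ℂ] H} (h : ProjPath P Q) : ProjPath (1 - P) (1 - Q) := by
  obtain ⟨f, hf, h0, h1, h⟩ := h
  exact ⟨fun t => 1 - f t, continuousOn_const.sub hf, by simp [h0], by simp [h1],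
    fun t ht => (h t ht).compl⟩

open ContinuousLinearMap in
lemma rot_path {E : Type*} [NormedAddCommGroup E] [InnerProductSpace ℂ E] [CompleteSpace E]
    (V W : E →L[ℂ] H) (hV : adjoint V ∘L V = 1) (hW : adjoint W ∘L W = 1)
    (hVW : adjoint V ∘L W = 0) (hWV : adjoint W ∘L V = 0) :
    ProjPath (V ∘L adjoint V) (W ∘L adjoint W) := by
  let g : ℝ → (E →L[ℂ] H) := fun t =>
    ((Real.cos (t * (Real.pi / 2)) : ℝ) : ℂ) • V + ((Real.sin (t * (Real.pi / 2)) : ℝ) : ℂ) • W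
  have hg : Continuous g := by
    unfold g
    fun_prop
  have hgg : ∀ t, adjoint (g t) ∘L g t = 1 := by
    intro t
    have : ((Real.cos (t * (Real.pi / 2)) : ℝ) : ℂ) ^ 2 +
      ((Real.sin (t * (Real.pi / 2)) : ℝ) : ℂ) ^ 2 = 1 := by
      rw [← Complex.ofReal_pow, ← Complex.ofReal_pow, ← Complex.ofReal_add,
        Real.cos_sq_add_sin_sq, Complex.ofReal_one]
    simp only [g, map_add, map_smulₛₗ, add_comp, comp_add, smul_comp, comp_smul, hV, hW, hVW, hWV,
      smul_zero, Complex.conj_ofReal, add_zero, zero_add, smul_smul]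
    rw [← add_smul, ← pow_two, ← pow_two, this, one_smul]
  refine ⟨fun t => g t ∘L adjoint (g t), ?_, ?_, ?_, ?_⟩
  · have : Continuous fun t => adjoint (g t) := adjoint.continuous.comp hg
    exact (hg.clm_comp this).continuousOn
  · simp [g]
  · simp [g]
  · intro t _
    refine ⟨?_, ?_⟩
    · rw [isSelfAdjoint_iff', adjoint_comp, adjoint_adjoint]
    · change (g t ∘L adjoint (g t)) ∘L (g t ∘L adjoint (g t)) = _
      rw [comp_assoc, ← comp_assoc (adjoint (g t)), hgg]
      rfl

lemma path_of_iso (K L : Submodule ℂ H) [CompleteSpace K] [CompleteSpace L]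
    (h : K ⟂ L) (e : K ≃ₗᵢ[ℂ] L) : ProjPath K.starProjection L.starProjection := by
  have hin : ∀ x ∈ K, ∀ y ∈ L, ⟪x, y⟫_ℂ = 0 := fun x hx y hy =>
    Submodule.IsOrtho.inner_eq h hx hy
  have hin' : ∀ x ∈ L, ∀ y ∈ K, ⟪x, y⟫_ℂ = 0 := fun x hx y hy =>
    Submodule.IsOrtho.inner_eq h.symm hx hy
  let e' : K →L[ℂ] L := e.toContinuousLinearEquiv
  have he : e' ∘L ContinuousLinearMap.adjoint e' = 1 := by
    ext x
    simp [e', LinearIsometryEquiv.adjoint_eq_symm]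
  have := rot_path K.subtypeL (L.subtypeL ∘L e') ?_ ?_ ?_ ?_
  · convert this using 1
    · rw [Submodule.adjoint_subtypeL]; rfl
    · rw [ContinuousLinearMap.adjoint_comp, Submodule.adjoint_subtypeL,
        ContinuousLinearMap.comp_assoc, ← ContinuousLinearMap.comp_assoc e', he]; rfl
  · rw [← ContinuousLinearMap.norm_map_iff_adjoint_comp_self]
    intro x; rfl
  · rw [← ContinuousLinearMap.norm_map_iff_adjoint_comp_self]
    intro x; exact e.norm_map x
  · ext x
    refine congrArg _ (ext_inner_left ℂ fun y => ?_)
    rw [ContinuousLinearMap.comp_apply, ContinuousLinearMap.adjoint_inner_right]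
    exact (hin _ y.2 _ (e x).2).trans (inner_zero_right y).symm
  · ext x
    refine congrArg _ (ext_inner_left ℂ fun y => ?_)
    rw [ContinuousLinearMap.comp_apply, ContinuousLinearMap.adjoint_inner_right]
    exact (hin' _ (e y).2 _ x.2).trans (inner_zero_right y).symm

lemma exists_nat_basis {E : Type*} [NormedAddCommGroup E] [InnerProductSpace ℂ E] [CompleteSpace E]
    [TopologicalSpace.SeparableSpace E] (hE : ¬ FiniteDimensional ℂ E) :
    Nonempty (HilbertBasis ℕ ℂ E) := by
  obtain ⟨w, b, hb⟩ := exists_hilbertBasis ℂ E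
  have ho := b.orthonormal
  have hc : w.Countable := by
    have hd : w.PairwiseDisjoint (fun x => Metric.ball x (1/2)) := by
      intro x hx y hy hxy
      apply Metric.ball_disjoint_ball
      have h2 := ho.2 (i := ⟨x, hx⟩) (j := ⟨y, hy⟩) (by simpa using hxy)
      have h1 := ho.1 ⟨x, hx⟩
      have h1' := ho.1 ⟨y, hy⟩
      simp only [hb] at h1 h2 h1'
      have := @norm_sub_sq ℂ E _ _ _ x y
      rw [h1, h1', h2] at this
      simp at this
      rw [dist_eq_norm]
      nlinarith [norm_nonneg (x - y)]
    exact hd.countable_of_isOpen (fun x _ => Metric.isOpen_ball)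
      (fun x _ => ⟨x, by simp⟩)
  have : Countable w := hc
  have : Infinite w := by
    by_contra hf
    rw [not_infinite_iff_finite] at hf
    have := Fintype.ofFinite w
    exact hE (b.toOrthonormalBasis.toBasis.finiteDimensional_of_finite)
  obtain ⟨e⟩ := nonempty_equiv_of_countable (α := ℕ) (β := w)
  refine ⟨HilbertBasis.mk (v := b ∘ e) (ho.comp _ e.injective) ?_⟩
  rw [e.surjective.range_comp, b.dense_span]

lemma exists_iso_inf [TopologicalSpace.SeparableSpace H] (K L : Submodule ℂ H)
    [CompleteSpace K] [CompleteSpace L]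
    (hK : ¬ FiniteDimensional ℂ K) (hL : ¬ FiniteDimensional ℂ L) : Nonempty (K ≃ₗᵢ[ℂ] L) := by
  have : SecondCountableTopology H := UniformSpace.secondCountable_of_separable H
  obtain ⟨b⟩ := exists_nat_basis hK
  obtain ⟨c⟩ := exists_nat_basis hL
  exact ⟨b.repr.trans c.repr.symm⟩

lemma exists_iso_fin (K L : Submodule ℂ H)
    [FiniteDimensional ℂ K] [FiniteDimensional ℂ L]
    (h : Module.finrank ℂ K = Module.finrank ℂ L) : Nonempty (K ≃ₗᵢ[ℂ] L) :=
  ⟨(stdOrthonormalBasis ℂ K).equiv (stdOrthonormalBasis ℂ L) (finCongr h)⟩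

lemma exists_unit_orth (K S : Submodule ℂ H) (hK : ¬ FiniteDimensional ℂ K)
    [FiniteDimensional ℂ S] : ∃ x ∈ K, ‖x‖ = 1 ∧ ∀ y ∈ S, ⟪y, x⟫_ℂ = 0 := by
  have : ∃ x ∈ K, x ≠ 0 ∧ x ∈ Sᗮ := by
    by_contra hcon
    push Not at hcon
    apply hK
    let φ : K →ₗ[ℂ] S := (S.orthogonalProjectionOnto : H →ₗ[ℂ] S) ∘ₗ K.subtype
    apply FiniteDimensional.of_injective φ
    rw [← LinearMap.ker_eq_bot, LinearMap.ker_eq_bot']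
    rintro ⟨x, hx⟩ h0
    by_contra hne
    refine hcon x hx (by simpa using hne) ?_
    exact Submodule.orthogonalProjectionOnto_eq_zero_iff.mp h0
  obtain ⟨x, hx, hx0, hxS⟩ := this
  refine ⟨((‖x‖⁻¹ : ℝ) : ℂ) • x, K.smul_mem _ hx, ?_, ?_⟩
  · rw [norm_smul]; simp [hx0]
  · intro y hy
    rw [inner_smul_right, Submodule.inner_right_of_mem_orthogonal hy hxS, mul_zero]

lemma exists_orth_pair (K L : Submodule ℂ H) [CompleteSpace K] [CompleteSpace L]
    (hK : ¬ FiniteDimensional ℂ K) (hL : ¬ FiniteDimensional ℂ L) :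
    ∃ E F : Submodule ℂ H, IsClosed (E : Set H) ∧ IsClosed (F : Set H) ∧ E ≤ K ∧ F ≤ L ∧
      ¬ FiniteDimensional ℂ E ∧ ¬ FiniteDimensional ℂ F ∧ E ⟂ F := by
  classical
  obtain ⟨f, hf, hr⟩ := exists_seq_of_forall_finset_exists (α := H × H)
    (fun x => x.1 ∈ K ∧ x.2 ∈ L ∧ ‖x.1‖ = 1 ∧ ‖x.2‖ = 1 ∧ ⟪x.1, x.2⟫_ℂ = 0)
    (fun x y => ⟪x.1, y.1⟫_ℂ = 0 ∧ ⟪x.1, y.2⟫_ℂ = 0 ∧ ⟪x.2, y.1⟫_ℂ = 0 ∧ ⟪x.2, y.2⟫_ℂ = 0)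
    (by
      intro s _
      let T : Finset H := s.image Prod.fst ∪ s.image Prod.snd
      obtain ⟨p, hpK, hp1, hp⟩ := exists_unit_orth K (Submodule.span ℂ (T : Set H)) hK
      obtain ⟨q, hqL, hq1, hq⟩ := exists_unit_orth L
        (Submodule.span ℂ ((insert p T : Finset H) : Set H)) hL
      refine ⟨(p, q), ⟨hpK, hqL, hp1, hq1, hq _ (Submodule.subset_span (by simp))⟩, ?_⟩
      intro x hx
      have m1 : x.1 ∈ T := Finset.mem_union_left _ (Finset.mem_image_of_mem _ hx)
      have m2 : x.2 ∈ T := Finset.mem_union_right _ (Finset.mem_image_of_mem _ hx)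
      refine ⟨hp _ (Submodule.subset_span m1),
        hq _ (Submodule.subset_span (Finset.mem_insert_of_mem m1)),
        hp _ (Submodule.subset_span m2),
        hq _ (Submodule.subset_span (Finset.mem_insert_of_mem m2))⟩)
  have key : ∀ (g : ℕ → H), (∀ n, ‖g n‖ = 1) → (∀ m n, m < n → ⟪g m, g n⟫_ℂ = 0) →
      ¬ FiniteDimensional ℂ (Submodule.span ℂ (Set.range g)).topologicalClosure := by
    intro g h1 h2 hfin
    have hon : Orthonormal ℂ g := by
      refine ⟨h1, fun m n hmn => ?_⟩
      rcases lt_or_gt_of_ne hmn with h | h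
      · exact h2 _ _ h
      · exact inner_eq_zero_symm.mp (h2 _ _ h)
    have hfin' : FiniteDimensional ℂ (Submodule.span ℂ (Set.range g)) :=
      Submodule.finiteDimensional_of_le (Submodule.le_topologicalClosure _)
    have := (linearIndependent_span hon.linearIndependent).finite
    exact not_finite ℕ
  refine ⟨(Submodule.span ℂ (Set.range fun n => (f n).1)).topologicalClosure,
    (Submodule.span ℂ (Set.range fun n => (f n).2)).topologicalClosure,
    Submodule.isClosed_topologicalClosure _, Submodule.isClosed_topologicalClosure _, ?_, ?_,
    key _ (fun n => (hf n).2.2.1) (fun m n h => (hr m n h).1),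
    key _ (fun n => (hf n).2.2.2.1) (fun m n h => (hr m n h).2.2.2), ?_⟩
  · refine Submodule.topologicalClosure_minimal _ (Submodule.span_le.mpr ?_)
      (completeSpace_coe_iff_isComplete.mp ‹CompleteSpace K›).isClosed
    rintro _ ⟨n, rfl⟩
    exact (hf n).1
  · refine Submodule.topologicalClosure_minimal _ (Submodule.span_le.mpr ?_)
      (completeSpace_coe_iff_isComplete.mp ‹CompleteSpace L›).isClosed
    rintro _ ⟨n, rfl⟩
    exact (hf n).2.1
  · have h0 : (Submodule.span ℂ (Set.range fun n => (f n).1)) ⟂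
        (Submodule.span ℂ (Set.range fun n => (f n).2)) := by
      rw [Submodule.isOrtho_span]
      rintro _ ⟨m, rfl⟩ _ ⟨n, rfl⟩
      rcases lt_trichotomy m n with h | h | h
      · exact (hr _ _ h).2.1
      · subst h; exact (hf _).2.2.2.2
      · exact inner_eq_zero_symm.mp (hr _ _ h).2.2.1
    have h1 : (Submodule.span ℂ (Set.range fun n => (f n).1)) ⟂
        (Submodule.span ℂ (Set.range fun n => (f n).2)).topologicalClosure := by
      have := Submodule.topologicalClosure_minimal _ h0.symm (Submodule.isClosed_orthogonal _)
      exact Submodule.IsOrtho.symm this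
    exact Submodule.topologicalClosure_minimal _ h1 (Submodule.isClosed_orthogonal _)

lemma path_inf [TopologicalSpace.SeparableSpace H] (K L : Submodule ℂ H)
    [CompleteSpace K] [CompleteSpace L]
    (hK : ¬ FiniteDimensional ℂ K) (hK' : ¬ FiniteDimensional ℂ Kᗮ)
    (hL : ¬ FiniteDimensional ℂ L) (hL' : ¬ FiniteDimensional ℂ Lᗮ) :
    ProjPath K.starProjection L.starProjection := by
  obtain ⟨E, F, hEc, hFc, hEK, hFL, hE, hF, hEF⟩ := exists_orth_pair K L hK hL
  have : CompleteSpace E := hEc.completeSpace_coe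
  have : CompleteSpace F := hFc.completeSpace_coe
  have main : ∀ (A B : Submodule ℂ H) [CompleteSpace A] [CompleteSpace B],
      ¬ FiniteDimensional ℂ A → ¬ FiniteDimensional ℂ B → A ⟂ B →
      ProjPath A.starProjection B.starProjection := by
    intro A B _ _ hA hB hAB
    obtain ⟨e⟩ := exists_iso_inf A B hA hB
    exact path_of_iso A B hAB e
  have h1 := main K Kᗮ hK hK' (Submodule.isOrtho_orthogonal_right _)
  have h2 := main Kᗮ E hK' hE ((Submodule.isOrtho_orthogonal_left _).mono_right hEK)
  have h3 := main E F hE hF hEF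
  have h4 := main F Lᗮ hF hL' ((Submodule.isOrtho_orthogonal_right _).mono_left hFL)
  have h5 := main Lᗮ L hL' hL (Submodule.isOrtho_orthogonal_left _)
  exact (((h1.trans h2).trans h3).trans h4).trans h5

lemma path_fin (hinf : ¬ FiniteDimensional ℂ H) (K L : Submodule ℂ H)
    [FiniteDimensional ℂ K] [FiniteDimensional ℂ L]
    (h : Module.finrank ℂ K = Module.finrank ℂ L) :
    ProjPath K.starProjection L.starProjection := by
  have hM : ¬ FiniteDimensional ℂ (K ⊔ L : Submodule ℂ H)ᗮ := by
    intro hM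
    apply hinf
    have : FiniteDimensional ℂ ((K ⊔ L) ⊔ (K ⊔ L)ᗮ : Submodule ℂ H) := inferInstance
    rw [Submodule.sup_orthogonal_of_hasOrthogonalProjection] at this
    exact Module.finite_def.mpr (Module.Finite.iff_fg.mp this)
  obtain ⟨s, hs, hli⟩ := exists_finset_linearIndependent_of_le_rank (R := ℂ)
    (M := (K ⊔ L : Submodule ℂ H)ᗮ) (n := Module.finrank ℂ K) (by
      have : Cardinal.aleph0 ≤ Module.rank ℂ (K ⊔ L : Submodule ℂ H)ᗮ := by
        rw [← not_lt]; intro h'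
        exact hM (Module.rank_lt_aleph0_iff.mp h')
      exact (Cardinal.natCast_lt_aleph0).le.trans this)
  let R : Submodule ℂ H := (Submodule.span ℂ (s : Set (K ⊔ L : Submodule ℂ H)ᗮ)).map
    (K ⊔ L : Submodule ℂ H)ᗮ.subtype
  have hR : R ≤ (K ⊔ L)ᗮ := Submodule.map_subtype_le _ _
  have hRf : FiniteDimensional ℂ R := by unfold R; infer_instance
  have hRr : Module.finrank ℂ R = Module.finrank ℂ K := by
    unfold R
    rw [Submodule.finrank_map_subtype_eq, finrank_span_finset_eq_card hli, hs]
  have hKL : (K ⊔ L) ⟂ R := (Submodule.isOrtho_orthogonal_right _).mono_right hR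
  obtain ⟨e1⟩ := exists_iso_fin K R hRr.symm
  obtain ⟨e2⟩ := exists_iso_fin R L (hRr.trans h)
  exact (path_of_iso K R (hKL.mono_left le_sup_left) e1).trans
    (path_of_iso R L (hKL.mono_left le_sup_right).symm e2)

lemma IsOrthProj.exists_eq {P : H →L[ℂ] H} (h : IsOrthProj P) :
    ∃ (K : Submodule ℂ H) (_ : CompleteSpace K), P = K.starProjection := by
  have h' : IsStarProjection P := ⟨h.2, h.1⟩
  obtain ⟨K, hK, e⟩ := isStarProjection_iff_eq_starProjection.mp h'
  have hc : IsClosed (K : Set H) := by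
    rw [← Submodule.orthogonal_orthogonal K]
    exact Submodule.isClosed_orthogonal _
  exact ⟨K, hc.completeSpace_coe, e⟩

lemma range_starProjection_coe (K : Submodule ℂ H) [K.HasOrthogonalProjection] :
    LinearMap.range (K.starProjection : H →ₗ[ℂ] H) = K :=
  Submodule.range_starProjection K

lemma rank_le_of_close {P Q : H →L[ℂ] H} (hQ : IsOrthProj Q)
    (h : ‖P - Q‖ < 1) :
    Module.rank ℂ (LinearMap.range (Q : H →ₗ[ℂ] H)) ≤
      Module.rank ℂ (LinearMap.range (P : H →ₗ[ℂ] H)) := by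
  let φ : LinearMap.range (Q : H →ₗ[ℂ] H) →ₗ[ℂ] LinearMap.range (P : H →ₗ[ℂ] H) :=
    (P : H →ₗ[ℂ] H).rangeRestrict ∘ₗ (LinearMap.range (Q : H →ₗ[ℂ] H)).subtype
  apply LinearMap.rank_le_of_injective φ
  rw [← LinearMap.ker_eq_bot, LinearMap.ker_eq_bot']
  rintro ⟨_, y, rfl⟩ h0
  have h0' : P (Q y) = 0 := congrArg Subtype.val h0
  have hq : Q (Q y) = Q y := congrArg (fun T : H →L[ℂ] H => T y) hQ.2
  have := (P - Q).le_opNorm (Q y)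
  rw [sub_apply, h0', hq, zero_sub, norm_neg] at this
  have hz : Q y = 0 := by
    by_contra hne
    have := norm_pos_iff.mpr hne
    nlinarith
  exact Subtype.ext hz

lemma rank_eq_of_path {P Q : H →L[ℂ] H} (h : ProjPath P Q) :
    Module.rank ℂ (LinearMap.range (P : H →ₗ[ℂ] H)) =
      Module.rank ℂ (LinearMap.range (Q : H →ₗ[ℂ] H)) := by
  obtain ⟨f, hf, rfl, rfl, h⟩ := h
  let g : Set.Icc (0:ℝ) 1 → Cardinal := fun t =>
    Module.rank ℂ (LinearMap.range (f t : H →ₗ[ℂ] H))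
  have hg : IsLocallyConstant g := by
    rw [IsLocallyConstant.iff_eventually_eq]
    intro t
    have hc : Continuous fun s : Set.Icc (0:ℝ) 1 => f s := hf.domRestrict
    filter_upwards [Metric.continuous_iff'.mp hc t 1 one_pos] with s hs
    rw [dist_eq_norm] at hs
    apply le_antisymm
    · apply rank_le_of_close (h s s.2)
      rwa [norm_sub_rev]
    · exact rank_le_of_close (h t t.2) hs
  exact hg.apply_eq_of_preconnectedSpace ⟨0, by simp⟩ ⟨1, by simp⟩

end Helpers

theorem stmt_13 {H : Type*} [NormedAddCommGroup H] [InnerProductSpace ℂ H]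
    [CompleteSpace H] [TopologicalSpace.SeparableSpace H]
    (hinf : ¬ FiniteDimensional ℂ H) :
    (∀ P Q : H →L[ℂ] H, IsOrthProj P → IsOrthProj Q →
      (ProjPath P Q ↔
        (Module.rank ℂ (LinearMap.range (P : H →ₗ[ℂ] H)) =
           Module.rank ℂ (LinearMap.range (Q : H →ₗ[ℂ] H)) ∧
         Module.rank ℂ (LinearMap.range ((1 - P : H →L[ℂ] H) : H →ₗ[ℂ] H)) =
           Module.rank ℂ (LinearMap.range ((1 - Q : H →L[ℂ] H) : H →ₗ[ℂ] H))))) ∧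
    (∀ P : H →L[ℂ] H, IsOrthProj P →
      ¬ FiniteDimensional ℂ (LinearMap.range (P : H →ₗ[ℂ] H)) →
      ¬ FiniteDimensional ℂ (LinearMap.range ((1 - P : H →L[ℂ] H) : H →ₗ[ℂ] H)) →
      ProjPath P (1 - P)) := by
  constructor
  · intro P Q hP hQ
    refine ⟨fun h => ⟨rank_eq_of_path h, rank_eq_of_path h.compl⟩, ?_⟩
    rintro ⟨h1, h2⟩
    obtain ⟨K, hK, rfl⟩ := hP.exists_eq
    obtain ⟨L, hL, rfl⟩ := hQ.exists_eq
    have eK : (1 : H →L[ℂ] H) - K.starProjection = Kᗮ.starProjection :=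
      (Submodule.starProjection_orthogonal' K).symm
    have eL : (1 : H →L[ℂ] H) - L.starProjection = Lᗮ.starProjection :=
      (Submodule.starProjection_orthogonal' L).symm
    rw [eK, eL] at h2
    rw [range_starProjection_coe, range_starProjection_coe] at h1 h2
    have tr : ∀ A B : Submodule ℂ H, Module.rank ℂ A = Module.rank ℂ B →
        FiniteDimensional ℂ A → FiniteDimensional ℂ B := by
      intro A B hAB hA
      refine Module.rank_lt_aleph0_iff.mp ?_
      rw [← hAB]
      exact Module.rank_lt_aleph0_iff.mpr hA
    by_cases c1 : FiniteDimensional ℂ K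
    · have := tr _ _ h1 c1
      exact path_fin hinf K L (congrArg Cardinal.toNat h1)
    by_cases c2 : FiniteDimensional ℂ Kᗮ
    · have := tr _ _ h2 c2
      have := (path_fin hinf Kᗮ Lᗮ (congrArg Cardinal.toNat h2)).compl
      rw [← eK, ← eL] at this
      simpa using this
    exact path_inf K L c1 c2 (fun h => c1 (tr _ _ h1.symm h)) (fun h => c2 (tr _ _ h2.symm h))
  · intro P hP h1 h2
    obtain ⟨K, hK, rfl⟩ := hP.exists_eq
    have eK : (1 : H →L[ℂ] H) - K.starProjection = Kᗮ.starProjection :=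
      (Submodule.starProjection_orthogonal' K).symm
    rw [eK] at h2 ⊢
    rw [range_starProjection_coe] at h1 h2
    obtain ⟨e⟩ := exists_iso_inf K Kᗮ h1 h2
    exact path_of_iso K Kᗮ (Submodule.isOrtho_orthogonal_right _) e
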